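/- arXiv:2002.06494 — 4 statements merged into one kernel-verified Lean document; each statement's English description precedes it below -/
import Mathlib

section
/- (Zonotope containment, sufficient condition.) Let c₁, c₂ ∈ ℝ^q, G₁ ∈ ℝ^{q×r}, G₂ ∈ ℝ^{q×s}. If there exist a matrix Γ ∈ ℝ^{s×r} and a vector γ ∈ ℝ^s such that G₁ = G₂Γ, c₂ − c₁ = G₂γ, and for every row index i ∈ {1,…,s} the absolute row sum satisfies Σ_{j=1}^{r} |Γ_{ij}| + |γ_i| ≤ 1 (i.e. ‖[Γ, γ]‖_∞ ≤ 1), then Z(c₁,G₁) ⊆ Z(c₂,G₂). -/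
/-- The zonotope `Z(c, G) = { c + G ξ : ‖ξ‖_∞ ≤ 1 }`. -/
def zonotope {n ι : Type*} [Fintype ι] (c : n → ℝ) (G : Matrix n ι ℝ) : Set (n → ℝ) :=
  {x | ∃ ξ : ι → ℝ, (∀ i, |ξ i| ≤ 1) ∧ x = c + G.mulVec ξ}

/-- Zonotope containment (sufficient condition): if `G₁ = G₂ Γ`, `c₂ - c₁ = G₂ γ`, and each
absolute row sum of `[Γ, γ]` is at most `1`, then `Z(c₁, G₁) ⊆ Z(c₂, G₂)`. -/
theorem zonotope_containment {q r s : ℕ} (c₁ c₂ : Fin q → ℝ)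
    (G₁ : Matrix (Fin q) (Fin r) ℝ) (G₂ : Matrix (Fin q) (Fin s) ℝ)
    (Γ : Matrix (Fin s) (Fin r) ℝ) (γ : Fin s → ℝ)
    (hG : G₁ = G₂ * Γ) (hc : c₂ - c₁ = G₂.mulVec γ)
    (hrow : ∀ i : Fin s, (∑ j : Fin r, |Γ i j|) + |γ i| ≤ 1) :
    zonotope c₁ G₁ ⊆ zonotope c₂ G₂ := by
  rintro x ⟨ξ, hξ, rfl⟩
  refine ⟨Γ.mulVec ξ - γ, fun i => ?_, ?_⟩
  · have h1 : |(Γ.mulVec ξ) i| ≤ ∑ j : Fin r, |Γ i j| := by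
      simp only [Matrix.mulVec, dotProduct]
      refine (Finset.abs_sum_le_sum_abs _ _).trans (Finset.sum_le_sum fun j _ => ?_)
      rw [abs_mul]
      exact mul_le_of_le_one_right (abs_nonneg _) (hξ j)
    have h2 := abs_sub ((Γ.mulVec ξ) i) (γ i)
    have h3 := hrow i
    rw [Pi.sub_apply]
    linarith
  · rw [Matrix.mulVec_sub, Matrix.mulVec_mulVec, ← hG, ← hc]
    abel
end

section
/- (Weighted zonotope containment.) Let c₁, c₂ ∈ ℝ^q, G₁ ∈ ℝ^{q×r}, G₂ ∈ ℝ^{q×s}, and let α ∈ ℝ^s with α_i > 0 for all i. If there exist a matrix Γ ∈ ℝ^{s×r} and a vector γ ∈ ℝ^s such that G₁ = G₂Γ, c₂ − c₁ = G₂γ, and for every row index i ∈ {1,…,s} the absolute row sum satisfies Σ_{j=1}^{r} |Γ_{ij}| + |γ_i| ≤ α_i, then Z(c₁,G₁) ⊆ Z(c₂, G₂·Diag(α)), where Diag(α) is the s×s diagonal matrix with diagonal α. -/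
/-- Weighted zonotope containment: for `α > 0` componentwise, if `G₁ = G₂ Γ`, `c₂ - c₁ = G₂ γ`,
and each absolute row sum of `[Γ, γ]` is at most `α_i`, then
`Z(c₁, G₁) ⊆ Z(c₂, G₂ · Diag(α))`. -/
theorem weighted_zonotope_containment {q r s : ℕ} (c₁ c₂ : Fin q → ℝ)
    (G₁ : Matrix (Fin q) (Fin r) ℝ) (G₂ : Matrix (Fin q) (Fin s) ℝ)
    (α : Fin s → ℝ) (hα : ∀ i, 0 < α i)
    (Γ : Matrix (Fin s) (Fin r) ℝ) (γ : Fin s → ℝ)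
    (hG : G₁ = G₂ * Γ) (hc : c₂ - c₁ = G₂.mulVec γ)
    (hrow : ∀ i : Fin s, (∑ j : Fin r, |Γ i j|) + |γ i| ≤ α i) :
    zonotope c₁ G₁ ⊆ zonotope c₂ (G₂ * Matrix.diagonal α) := by
  rintro x ⟨ξ, hξ, rfl⟩
  refine ⟨fun i => (Γ.mulVec ξ i - γ i) / α i, ?_, ?_⟩
  · intro i
    rw [abs_div, abs_of_pos (hα i), div_le_one (hα i)]
    refine le_trans (abs_sub _ _) (le_trans (add_le_add_left ?_ _) (hrow i))
    simp only [Matrix.mulVec, dotProduct]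
    refine le_trans (Finset.abs_sum_le_sum_abs _ _) (Finset.sum_le_sum fun j _ => ?_)
    rw [abs_mul]
    exact mul_le_of_le_one_right (abs_nonneg _) (hξ j)
  · have h : (Matrix.diagonal α).mulVec (fun i => (Γ.mulVec ξ i - γ i) / α i)
        = Γ.mulVec ξ - γ := by
      funext i
      rw [Matrix.mulVec_diagonal, Pi.sub_apply]
      exact mul_div_cancel₀ _ (hα i).ne'
    rw [← Matrix.mulVec_mulVec, h, Matrix.mulVec_sub, ← hc, hG, Matrix.mulVec_mulVec]
    abel
end

section
/- (Minkowski cancellation for convex sets.) Let A, C ⊆ ℝ^n be nonempty compact convex sets and let B ⊆ ℝ^n be a closed convex set. If A ⊕ C ⊆ B ⊕ C, then A ⊆ B. -/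
open Pointwise

/-- Minkowski cancellation for convex sets: if `A, C ⊆ ℝⁿ` are nonempty compact convex sets,
`B ⊆ ℝⁿ` is closed and convex, and `A ⊕ C ⊆ B ⊕ C`, then `A ⊆ B`. -/
theorem minkowski_cancellation {n : ℕ} (A B C : Set (Fin n → ℝ))
    (hAne : A.Nonempty) (hCne : C.Nonempty)
    (hAcomp : IsCompact A) (hCcomp : IsCompact C)
    (hAconv : Convex ℝ A) (hCconv : Convex ℝ C)
    (hBclosed : IsClosed B) (hBconv : Convex ℝ B)
    (h : A + C ⊆ B + C) : A ⊆ B := by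
  intro a ha
  by_contra hb
  obtain ⟨f, u, hf, hu⟩ := geometric_hahn_banach_closed_point hBconv hBclosed hb
  obtain ⟨c, hc, hmax⟩ := hCcomp.exists_isMaxOn hCne f.continuous.continuousOn
  obtain ⟨b, hbB, c', hc', heq⟩ := Set.mem_add.1 (h (Set.add_mem_add ha hc))
  have h1 : f b + f c' = f a + f c := by rw [← map_add, ← map_add, heq]
  have h2 : f c' ≤ f c := hmax hc'
  have h3 := hf b hbB
  linarith
end

section
/- (Pontryagin-difference step in the invariance proof.) Let H ∈ ℝ^{n×k}, T ∈ ℝ^{n×k}, G ∈ ℝ^{n×p}, and β ∈ [0,1). If Z(0,H) ⊕ Z(0,G) ⊆ Z(0,T) ⊕ Z(0,βG), then Z(0,H) ⊕ (1−β)·Z(0,G) ⊆ Z(0,T). -/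
open Pointwise

theorem zonotope_zero_eq_image {n p : ℕ} (G : Matrix (Fin n) (Fin p) ℝ) :
    zonotope (0 : Fin n → ℝ) G = G.mulVecLin '' Set.Icc (-1 : Fin p → ℝ) 1 := by
  ext x
  simp only [zonotope, Set.mem_setOf_eq, Set.mem_image, Set.mem_Icc, Pi.le_def, abs_le, zero_add,
    Matrix.mulVecLin_apply, Pi.neg_apply, Pi.one_apply]
  constructor
  · rintro ⟨ξ, h, rfl⟩
    exact ⟨ξ, ⟨fun i => (h i).1, fun i => (h i).2⟩, rfl⟩
  · rintro ⟨ξ, h, rfl⟩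
    exact ⟨ξ, fun i => ⟨h.1 i, h.2 i⟩, rfl⟩

theorem zonotope_zero_convex {n p : ℕ} (G : Matrix (Fin n) (Fin p) ℝ) :
    Convex ℝ (zonotope (0 : Fin n → ℝ) G) := by
  rw [zonotope_zero_eq_image]
  exact (convex_Icc _ _).linear_image _

theorem zonotope_zero_compact {n p : ℕ} (G : Matrix (Fin n) (Fin p) ℝ) :
    IsCompact (zonotope (0 : Fin n → ℝ) G) := by
  rw [zonotope_zero_eq_image]
  exact isCompact_Icc.image (LinearMap.continuous_of_finiteDimensional _)

/-- Pontryagin-difference step: for `β ∈ [0,1)`, if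
`Z(0,H) ⊕ Z(0,G) ⊆ Z(0,T) ⊕ Z(0,βG)`, then `Z(0,H) ⊕ (1−β)·Z(0,G) ⊆ Z(0,T)`. -/
theorem pontryagin_step {n k p : ℕ}
    (H T : Matrix (Fin n) (Fin k) ℝ) (G : Matrix (Fin n) (Fin p) ℝ)
    (β : ℝ) (hβ0 : 0 ≤ β) (hβ1 : β < 1)
    (hsub : zonotope (0 : Fin n → ℝ) H + zonotope (0 : Fin n → ℝ) G ⊆
      zonotope (0 : Fin n → ℝ) T + zonotope (0 : Fin n → ℝ) (β • G)) :
    zonotope (0 : Fin n → ℝ) H + (1 - β) • zonotope (0 : Fin n → ℝ) G ⊆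
      zonotope (0 : Fin n → ℝ) T := by
  rintro _ ⟨h, hh, _, ⟨g, hg, rfl⟩, rfl⟩
  by_contra hx
  obtain ⟨f, u, hfu, hux⟩ := geometric_hahn_banach_closed_point (zonotope_zero_convex T)
    (zonotope_zero_compact T).isClosed hx
  obtain ⟨c, hc, hmax⟩ := (zonotope_zero_compact G).exists_isMaxOn ⟨g, hg⟩ f.continuous.continuousOn
  have hmem : (1 - β) • g + β • c ∈ zonotope (0 : Fin n → ℝ) G :=
    zonotope_zero_convex G hg hc (by linarith) hβ0 (by ring)
  obtain ⟨t, ht, _, ⟨η, hη, rfl⟩, he⟩ := hsub (Set.add_mem_add hh hmem)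
  have h1 := hfu t ht
  have h2 : f (G.mulVec η) ≤ f c := hmax ⟨η, hη, by simp⟩
  have h3 := congrArg f he
  simp only [zero_add, Matrix.smul_mulVec, map_add, map_smul, smul_eq_mul] at h3 hux
  have h4 := mul_le_mul_of_nonneg_left h2 hβ0
  linarith
end
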